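/- Let g = sl2(C) ⋉ h be a finite-dimensional sympathetic complex Lie algebra whose Levi subalgebra is isomorphic to sl2(C) and whose radical h decomposes into 4 simple sl2(C)-modules V_n, V_m, V_p, V_k (of highest weights n, m, p, k) satisfying the convention, with Z(h) = V_k. Then n, m, p and k are all even; equivalently, each of the four modules has odd dimension. -/

import Mathlib

namespace Symp

variable (g : Type*) [LieRing g] [LieAlgebra ℂ g]

/-- A derivation of `g` is inner if it is given by the adjoint action of some element. -/
def IsInnerDer {g : Type*} [LieRing g] [LieAlgebra ℂ g] (D : LieDerivation ℂ g g) : Prop :=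
  ∃ x : g, ∀ y : g, D y = ⁅x, y⁆

/-- `g` is perfect: `[g,g] = g`. -/
def IsPerfectLie : Prop :=
  ⁅(⊤ : LieIdeal ℂ g), (⊤ : LieIdeal ℂ g)⁆ = ⊤

/-- A sympathetic Lie algebra: trivial centre, perfect, all derivations inner. -/
def IsSympathetic : Prop :=
  LieAlgebra.center ℂ g = ⊥ ∧ IsPerfectLie g ∧
    ∀ D : LieDerivation ℂ g g, IsInnerDer D

/-- `s` is a simple Levi subalgebra of `g`: it is a simple Lie algebra and a vector-space
complement to the radical. -/
def IsSimpleLevi (s : LieSubalgebra ℂ g) : Prop :=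
  LieAlgebra.IsSimple ℂ s ∧
    IsCompl s.toSubmodule (LieAlgebra.radical ℂ g).toSubmodule

/-- `s` is a Levi subalgebra of `g` isomorphic to `sl₂(ℂ)`. -/
def IsSl2Levi (s : LieSubalgebra ℂ g) : Prop :=
  Nonempty (s ≃ₗ⁅ℂ⁆ LieAlgebra.SpecialLinear.sl (Fin 2) ℂ) ∧
    IsCompl s.toSubmodule (LieAlgebra.radical ℂ g).toSubmodule

/-- The subspace spanned by all brackets `⁅x, y⁆` with `x ∈ A`, `y ∈ B`. -/
def lieSpan2 (A B : Submodule ℂ g) : Submodule ℂ g :=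
  Submodule.span ℂ {z : g | ∃ x ∈ A, ∃ y ∈ B, z = ⁅x, y⁆}

/-- A subspace of `g` invariant under the bracket action of the subalgebra `s`. -/
def Invariant (s : LieSubalgebra ℂ g) (W : Submodule ℂ g) : Prop :=
  ∀ x ∈ s, ∀ w ∈ W, ⁅x, w⁆ ∈ W

/-- `V` is an irreducible `s`-submodule of `g`. -/
def IsIrreducibleSMod (s : LieSubalgebra ℂ g) (V : Submodule ℂ g) : Prop :=
  V ≠ ⊥ ∧ Invariant g s V ∧
    ∀ W : Submodule ℂ g, W ≤ V → Invariant g s W → W = ⊥ ∨ W = V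

/-- The family `V` is a decomposition of the radical of `g` into irreducible `s`-modules. -/
def IsDecomp (s : LieSubalgebra ℂ g) {k : ℕ} (V : Fin k → Submodule ℂ g) : Prop :=
  (∀ i, IsIrreducibleSMod g s (V i)) ∧ iSupIndep V ∧
    (⨆ i, V i) = (LieAlgebra.radical ℂ g).toSubmodule

/-- The convention: any nonzero bracket of two of the modules equals one of them,
for a unique index. -/
def Convention {k : ℕ} (V : Fin k → Submodule ℂ g) : Prop :=
  ∀ i j, lieSpan2 g (V i) (V j) ≠ ⊥ → ∃! q, lieSpan2 g (V i) (V j) = V q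

/-- The centre `Z(h)` of the radical `h = Rad(g)`, as a subspace of `g`. -/
def centerRad : Submodule ℂ g where
  carrier := {x | x ∈ LieAlgebra.radical ℂ g ∧ ∀ y ∈ LieAlgebra.radical ℂ g, ⁅x, y⁆ = 0}
  add_mem' := by
    rintro a b ⟨ha, ha'⟩ ⟨hb, hb'⟩
    exact ⟨add_mem ha hb, fun y hy => by rw [add_lie, ha' y hy, hb' y hy, add_zero]⟩
  zero_mem' := ⟨zero_mem _, fun y _ => zero_lie y⟩
  smul_mem' := by
    rintro c a ⟨ha, ha'⟩
    exact ⟨SMulMemClass.smul_mem c ha, fun y hy => by rw [smul_lie, ha' y hy, smul_zero]⟩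

/-- The derived subalgebra `[h,h]` of the radical `h = Rad(g)`, as a subspace of `g`. -/
def derivedRad : Submodule ℂ g :=
  lieSpan2 g (LieAlgebra.radical ℂ g).toSubmodule (LieAlgebra.radical ℂ g).toSubmodule

end Symp

namespace SympAux

/-- Bracket table of four modules sorted by depth; the value `0` encodes a vanishing bracket. -/
def tab (a b c d e f : Fin 4) : Fin 4 → Fin 4 → Fin 4 :=
  ![![a, b, d, 0], ![b, c, e, 0], ![d, e, f, 0], ![0, 0, 0, 0]]

/-- Weight vectors used to produce outer derivations. -/
def lams : List (Fin 4 → ℕ) :=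
  [![3, 3, 3, 6], ![1, 1, 2, 2], ![1, 1, 2, 3], ![1, 2, 3, 4], ![2, 4, 3, 6], ![1, 2, 2, 3],
    ![0, 3, 3, 6], ![4, 2, 4, 6], ![1, 2, 1, 2], ![2, 3, 4, 6], ![3, 2, 4, 6], ![2, 1, 3, 4],
    ![1, 0, 1, 2]]

/-- The Jacobi constraint on a bracket table. -/
def JacOK (t : Fin 4 → Fin 4 → Fin 4) : Prop :=
  ∀ x y z, t y z ≠ 0 → t x (t y z) ≠ 0 →
    (t x y ≠ 0 ∧ t (t x y) z ≠ 0) ∨ (t x z ≠ 0 ∧ t (t x z) y ≠ 0)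

/-- A weight vector compatible with a bracket table. -/
def LamOK (t : Fin 4 → Fin 4 → Fin 4) (l : Fin 4 → ℕ) : Prop :=
  ∀ i j, t i j ≠ 0 → l i + l j = l (t i j)

/-- The parity constraints on a bracket table. -/
def ParOK (t : Fin 4 → Fin 4 → Fin 4) (p : Fin 4 → Bool) : Prop :=
  (∀ i j, t i j ≠ 0 → (p i ^^ p j) = p (t i j)) ∧
    ∀ i j, t i i ≠ 0 → t i i = t j j → p i = p j

instance (t : Fin 4 → Fin 4 → Fin 4) : Decidable (JacOK t) := by unfold JacOK; infer_instance
instance (t : Fin 4 → Fin 4 → Fin 4) (l : Fin 4 → ℕ) : Decidable (LamOK t l) := by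
  unfold LamOK; infer_instance
instance (t : Fin 4 → Fin 4 → Fin 4) (p : Fin 4 → Bool) : Decidable (ParOK t p) := by
  unfold ParOK; infer_instance

theorem comb_dec : ∀ a b : Fin 4, (b ≠ 1) → ∀ c : Fin 4, c ≠ 1 → ∀ d : Fin 4, (d = 0 ∨ d = 3) →
    ∀ e : Fin 4, (e = 0 ∨ e = 3) → ∀ f : Fin 4, (f = 0 ∨ f = 3) →
    JacOK (tab a b c d e f) → (∀ l ∈ lams, ¬ LamOK (tab a b c d e f) l) →
    ∀ p0 p1 p2 p3 : Bool, ParOK (tab a b c d e f) ![p0, p1, p2, p3] →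
      p0 = false ∧ p1 = false ∧ p2 = false ∧ p3 = false := by
  decide +kernel

theorem comb_sorted (T : Fin 4 → Fin 4 → Fin 4 → Prop) (d : Fin 4 → ℕ)
    (hsym : ∀ i j q, T i j q → T j i q)
    (hfun : ∀ i j q q', T i j q → T i j q' → q = q')
    (hlt : ∀ i j q, T i j q → i < q)
    (hpar : ∀ i j q, T i j q → (d i + d j + d q) % 2 = 0)
    (hsp : ∀ i j q, T i i q → T j j q → d i % 2 = d j % 2)
    (hjac : ∀ a b c q r, T b c q → T a q r →
      (∃ u r', T a b u ∧ T u c r') ∨ (∃ u r', T a c u ∧ T u b r'))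
    (hlin : ∀ l : Fin 4 → ℕ, (∀ i j q, T i j q → l i + l j = l q) → l = 0) :
    ∀ i, d i % 2 = 0 := by
  classical
  have hT0 : ∀ i j, ¬ T i j 0 := fun i j h => by
    have := hlt _ _ _ h; omega
  let t : Fin 4 → Fin 4 → Fin 4 := fun i j => if h : ∃ q, T i j q then h.choose else 0
  have ht1 : ∀ i j q, T i j q → t i j = q := by
    intro i j q h
    have h' : ∃ q, T i j q := ⟨q, h⟩
    simp only [t, dif_pos h']
    exact hfun _ _ _ _ h'.choose_spec h
  have ht2 : ∀ i j, t i j ≠ 0 → T i j (t i j) := by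
    intro i j h
    by_cases h' : ∃ q, T i j q
    · have : t i j = h'.choose := by simp only [t, dif_pos h']
      rw [this]; exact h'.choose_spec
    · exact absurd (by simp only [t, dif_neg h']) h
  have hts : ∀ i j, t i j = t j i := by
    intro i j
    by_cases h : t i j = 0
    · by_cases h' : t j i = 0
      · rw [h, h']
      · exact ht1 _ _ _ (hsym _ _ _ (ht2 _ _ h'))
    · exact (ht1 _ _ _ (hsym _ _ _ (ht2 _ _ h))).symm
  have htl : ∀ i j, t i j ≠ 0 → i < t i j ∧ j < t i j := fun i j h =>
    ⟨hlt _ _ _ (ht2 _ _ h), hlt _ _ _ (hsym _ _ _ (ht2 _ _ h))⟩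
  have h3 : ∀ j, t 3 j = 0 := by
    intro j; by_contra h
    have := (htl _ _ h).1
    omega
  have h3' : ∀ j, t j 3 = 0 := fun j => by rw [hts, h3]
  have htab : t = tab (t 0 0) (t 0 1) (t 1 1) (t 0 2) (t 1 2) (t 2 2) := by
    funext i j
    fin_cases i <;> fin_cases j <;> simp [tab, h3, h3', hts 1 0, hts 2 0, hts 2 1]
  have hT : ∀ i j q, T i j q → t i j ≠ 0 := fun i j q h => by
    rw [ht1 _ _ _ h]; rintro rfl; exact hT0 _ _ h
  have hJ : JacOK t := by
    intro x y z h1 h2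
    rcases hjac x y z _ _ (ht2 _ _ h1) (ht2 _ _ h2) with ⟨u, r, h, h'⟩ | ⟨u, r, h, h'⟩
    · left
      refine ⟨hT _ _ _ h, ?_⟩
      rw [ht1 _ _ _ h]; exact hT _ _ _ h'
    · right
      refine ⟨hT _ _ _ h, ?_⟩
      rw [ht1 _ _ _ h]; exact hT _ _ _ h'
  have hL : ∀ l ∈ lams, ¬ LamOK t l := by
    intro l hl hl'
    have h0 : l = 0 := hlin l fun i j q h => by
      have := hl' i j (hT _ _ _ h)
      rwa [ht1 _ _ _ h] at this
    subst h0
    revert hl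
    have : ∀ m ∈ lams, m 3 ≠ 0 := by decide
    intro hl
    exact this _ hl rfl
  have hP : ParOK t ![decide (d 0 % 2 = 1), decide (d 1 % 2 = 1), decide (d 2 % 2 = 1),
      decide (d 3 % 2 = 1)] := by
    have : ![decide (d 0 % 2 = 1), decide (d 1 % 2 = 1), decide (d 2 % 2 = 1),
      decide (d 3 % 2 = 1)] = fun i => decide (d i % 2 = 1) := by
      funext i; fin_cases i <;> rfl
    rw [this]
    constructor
    · intro i j h
      have := hpar _ _ _ (ht2 _ _ h)
      rcases Nat.mod_two_eq_zero_or_one (d i) with h1 | h1 <;>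
      rcases Nat.mod_two_eq_zero_or_one (d j) with h2 | h2 <;>
      rcases Nat.mod_two_eq_zero_or_one (d (t i j)) with h3 | h3 <;>
      first
        | (exfalso; omega)
        | simp [h1, h2, h3]
    · intro i j h h'
      have := hsp i j _ (ht2 _ _ h) (h' ▸ ht2 j j (h' ▸ h))
      simp [this]
  have b1 : t 0 1 ≠ 1 := fun h => by
    have := (htl 0 1 (by rw [h]; decide)).2; omega
  have c1 : t 1 1 ≠ 1 := fun h => by
    have := (htl 1 1 (by rw [h]; decide)).2; omega
  have k3 : ∀ i, t i 2 = 0 ∨ t i 2 = 3 := fun i => by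
    by_cases h : t i 2 = 0
    · exact Or.inl h
    · have := (htl i 2 h).2; right; omega
  rw [htab] at hJ hL hP
  obtain ⟨p0, p1, p2, p3⟩ := comb_dec (t 0 0) (t 0 1) b1 (t 1 1) c1 (t 0 2) (k3 0) (t 1 2) (k3 1)
    (t 2 2) (k3 2) (by simpa only using hJ) hL _ _ _ _ hP
  simp only [decide_eq_false_iff_not] at p0 p1 p2 p3
  intro i
  fin_cases i
  · show d 0 % 2 = 0; omega
  · show d 1 % 2 = 0; omega
  · show d 2 % 2 = 0; omega
  · show d 3 % 2 = 0; omega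

theorem comb (T : Fin 4 → Fin 4 → Fin 4 → Prop) (d N : Fin 4 → ℕ)
    (hsym : ∀ i j q, T i j q → T j i q)
    (hfun : ∀ i j q q', T i j q → T i j q' → q = q')
    (hlt : ∀ i j q, T i j q → N i < N q)
    (hpar : ∀ i j q, T i j q → (d i + d j + d q) % 2 = 0)
    (hsp : ∀ i j q, T i i q → T j j q → d i % 2 = d j % 2)
    (hjac : ∀ a b c q r, T b c q → T a q r →
      (∃ u r', T a b u ∧ T u c r') ∨ (∃ u r', T a c u ∧ T u b r'))
    (hlin : ∀ l : Fin 4 → ℕ, (∀ i j q, T i j q → l i + l j = l q) → l = 0) :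
    ∀ i, d i % 2 = 0 := by
  let σ : Equiv.Perm (Fin 4) := Tuple.sort N
  have hσ : Monotone (N ∘ σ) := Tuple.monotone_sort N
  have key := comb_sorted (fun i j q => T (σ i) (σ j) (σ q)) (d ∘ σ)
    (fun i j q => hsym _ _ _)
    (fun i j q q' h h' => σ.injective (hfun _ _ _ _ h h'))
    (fun i j q h => by
      by_contra hc
      have h1 := hσ (not_lt.mp hc)
      have h2 := hlt _ _ _ h
      simp only [Function.comp] at h1
      omega)
    (fun i j q => hpar _ _ _)
    (fun i j q => hsp _ _ _)
    (fun a b c q r h h' => by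
      rcases hjac _ _ _ _ _ h h' with ⟨u, r', h1, h2⟩ | ⟨u, r', h1, h2⟩
      · exact Or.inl ⟨σ.symm u, σ.symm r', by simpa using h1, by simpa using h2⟩
      · exact Or.inr ⟨σ.symm u, σ.symm r', by simpa using h1, by simpa using h2⟩)
    (fun l hl => by
      have := hlin (l ∘ σ.symm) (fun i j q h => by
        have := hl (σ.symm i) (σ.symm j) (σ.symm q) (by simpa using h)
        simpa using this)
      funext i
      have h := congrFun this (σ i)
      simpa using h)
  intro i
  simpa using key (σ.symm i)

end SympAux
namespace SympAux
open LieModule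

theorem lie_rad_ne {g : Type*} [LieRing g] [LieAlgebra ℂ g] [FiniteDimensional ℂ g]
    (hr : LieAlgebra.radical ℂ g ≤ ⁅(⊤ : LieIdeal ℂ g), LieAlgebra.radical ℂ g⁆)
    (I : LieIdeal ℂ g) (hI : I ≠ ⊥) : ⁅LieAlgebra.radical ℂ g, I⁆ ≠ I := by
  intro hc
  have hIn : Nontrivial I := (LieSubmodule.nontrivial_iff_ne_bot ℂ g g).mpr hI
  obtain ⟨J, hJ, -⟩ : ∃ J : LieSubmodule ℂ g I, IsCoatom J ∧ ⊥ ≤ J :=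
    (eq_top_or_exists_le_coatom (⊥ : LieSubmodule ℂ g I)).resolve_left bot_ne_top
  have hMn : Nontrivial (I ⧸ J) := by
    apply Submodule.Quotient.nontrivial_iff.mpr
    intro h
    exact hJ.1 (by simpa using h)
  obtain ⟨χ, hχ⟩ := exists_nontrivial_weightSpace_of_isSolvable ℂ (LieAlgebra.radical ℂ g) (I ⧸ J)
  let W : LieSubmodule ℂ g (I ⧸ J) := weightSpaceOfIsLieTower ℂ (I ⧸ J) χ
  have hWmem : ∀ m, m ∈ W ↔ ∀ a : LieAlgebra.radical ℂ g, ⁅a, m⁆ = χ a • m := by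
    intro m
    exact mem_weightSpace _ _
  have hW : W = ⊤ := by
    have h1 : J ≤ W.comap (LieSubmodule.Quotient.mk' J) := by
      intro x hx
      have : LieSubmodule.Quotient.mk' J x = 0 := by
        simpa using hx
      rw [LieSubmodule.mem_comap, this]; exact W.zero_mem
    rcases hJ.le_iff.mp h1 with h | h
    · rw [eq_top_iff]
      intro m _
      obtain ⟨x, rfl⟩ := LieSubmodule.Quotient.surjective_mk' J m
      have : x ∈ W.comap (LieSubmodule.Quotient.mk' J) := by rw [h]; trivial
      exact this
    · exfalso
      obtain ⟨⟨m, hm⟩, hm0⟩ := exists_ne (0 : weightSpace (I ⧸ J) χ)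
      obtain ⟨x, rfl⟩ := LieSubmodule.Quotient.surjective_mk' J m
      have : x ∈ W.comap (LieSubmodule.Quotient.mk' J) := hm
      rw [h] at this
      apply hm0
      ext
      simpa using this
  have hact : ∀ (a : LieAlgebra.radical ℂ g) (m : I ⧸ J), ⁅(a : g), m⁆ = χ a • m := by
    intro a m
    have : m ∈ W := by rw [hW]; trivial
    exact (hWmem m).mp this a
  have hzero : ∀ a ∈ LieAlgebra.radical ℂ g, ∀ m : I ⧸ J, ⁅a, m⁆ = 0 := by
    intro a ha m
    have ha' := hr ha
    rw [← LieSubmodule.mem_toSubmodule, LieSubmodule.lieIdeal_oper_eq_linear_span'] at ha'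
    clear ha
    induction ha' using Submodule.span_induction with
    | mem x hx =>
      obtain ⟨z, -, b, hb, rfl⟩ := hx
      have e1 := hact ⟨b, hb⟩ m
      have e2 := hact ⟨b, hb⟩ ⁅z, m⁆
      simp only at e1 e2
      rw [lie_lie, e1, e2, lie_smul, sub_self]
    | zero => exact zero_lie m
    | add x y _ _ h1 h2 => rw [add_lie, h1, h2, add_zero]
    | smul c x _ h => rw [smul_lie, h, smul_zero]
  apply hJ.1
  rw [eq_top_iff]
  have hle : ⁅LieAlgebra.radical ℂ g, I⁆ ≤ J.map (LieSubmodule.incl I) := by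
    rw [LieSubmodule.lie_le_iff]
    intro a ha x hx
    refine (LieSubmodule.mem_map _).mpr ⟨⁅a, (⟨x, hx⟩ : I)⁆, ?_, rfl⟩
    have := hzero a ha (LieSubmodule.Quotient.mk' J ⟨x, hx⟩)
    rw [← LieModuleHom.map_lie] at this
    exact (LieSubmodule.Quotient.mk_eq_zero J).mp this
  rintro ⟨x, hx⟩ -
  rw [hc] at hle
  obtain ⟨y, hy, hyx⟩ := (LieSubmodule.mem_map _).mp (hle hx)
  have : y = ⟨x, hx⟩ := Subtype.ext hyx
  rwa [← this]

/-- The lower central series of the radical, as ideals of `g`. -/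
noncomputable def C (g : Type*) [LieRing g] [LieAlgebra ℂ g] : ℕ → LieIdeal ℂ g
  | 0 => LieAlgebra.radical ℂ g
  | n + 1 => ⁅LieAlgebra.radical ℂ g, C g n⁆

theorem C_nil {g : Type*} [LieRing g] [LieAlgebra ℂ g] [FiniteDimensional ℂ g]
    (hr : LieAlgebra.radical ℂ g ≤ ⁅(⊤ : LieIdeal ℂ g), LieAlgebra.radical ℂ g⁆) :
    ∃ n, C g n = ⊥ := by
  have hanti : Antitone (C g) := antitone_nat_of_succ_le fun n => LieSubmodule.lie_le_right _ _
  have : IsArtinian ℂ g := inferInstance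
  have : WellFoundedLT (LieSubmodule ℂ g g) := LieSubmodule.wellFoundedLT_of_isArtinian ℂ g g
  obtain ⟨n, hn⟩ := WellFoundedLT.antitone_chain_condition hanti
  refine ⟨n, ?_⟩
  by_contra h
  exact lie_rad_ne hr _ h (hn (n + 1) (Nat.le_succ n)).symm

end SympAux
namespace SympAux
open LieModule

theorem exists_hw {g : Type*} [LieRing g] [LieAlgebra ℂ g] [FiniteDimensional ℂ g]
    (s : LieSubalgebra ℂ g) (h e f : s) (t : IsSl2Triple h e f)
    (hspan : ∀ x : s, ∃ c₁ c₂ c₃ : ℂ, x = c₁ • e + c₂ • f + c₃ • h)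
    (V : Submodule ℂ g) (hV : Symp.IsIrreducibleSMod g s V)
    (d : ℕ) (hd : Module.finrank ℂ V = d + 1) :
    ∃ v : ℕ → g, (∀ r, v r ∈ V) ∧ (∀ r, ⁅(f : g), v r⁆ = v (r + 1)) ∧
      (∀ r, ⁅(h : g), v r⁆ = ((d : ℂ) - 2 * r) • v r) ∧ V ≤ Submodule.span ℂ (Set.range v) ∧
      v 0 ∉ Submodule.span ℂ (Set.range fun r => v (r + 1)) := by
  obtain ⟨hV0, hVinv, hVirr⟩ := hV
  let V' : LieSubmodule ℂ s g := { V with lie_mem := fun {x m} hm => hVinv x x.2 m hm }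
  have hn : Nontrivial V' := Submodule.nontrivial_iff_ne_bot.mpr hV0
  obtain ⟨μ, m', hm', P'⟩ := IsSl2Triple.exists_hasPrimitiveVectorWith (R := ℂ) (M := V') t
  have P : t.HasPrimitiveVectorWith (m' : g) μ :=
    { ne_zero := fun h0 => hm' (Subtype.ext h0)
      lie_h := congrArg Subtype.val P'.lie_h
      lie_e := congrArg Subtype.val P'.lie_e }
  obtain ⟨n, hμ⟩ := P.exists_nat
  set v : ℕ → g := fun r => ((toEnd ℂ s g f) ^ r) (m' : g) with hv
  have vf : ∀ r, ⁅f, v r⁆ = v (r + 1) := P.lie_f_pow_toEnd_f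
  have vh : ∀ r : ℕ, ⁅h, v r⁆ = ((n : ℂ) - 2 * r) • v r := fun r => by
    rw [← hμ]; exact P.lie_h_pow_toEnd_f r
  have ve : ∀ r : ℕ, ⁅e, v (r + 1)⁆ = ((r + 1) * ((n : ℂ) - r)) • v r := fun r => by
    rw [← hμ]; exact P.lie_e_pow_succ_toEnd_f r
  have ve0 : ⁅e, v 0⁆ = 0 := P.lie_e
  have vV : ∀ r, v r ∈ V := by
    intro r
    induction r with
    | zero => exact m'.2
    | succ r ih => rw [← vf]; exact hVinv f f.2 _ ih
  have vn : v (n + 1) = 0 := P.pow_toEnd_f_eq_zero_of_eq_nat hμ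
  have vz : ∀ r, v (n + 1 + r) = 0 := by
    intro r
    induction r with
    | zero => exact vn
    | succ r ih => rw [← add_assoc, ← vf, ih, lie_zero]
  have vnz : ∀ r ≤ n, v r ≠ 0 := fun r hr => P.pow_toEnd_f_ne_zero_of_eq_nat hμ hr
  have hWinv : Symp.Invariant g s (Submodule.span ℂ (Set.range v)) := by
    intro x hx w hw
    have hv_in : ∀ r, v r ∈ Submodule.span ℂ (Set.range v) := fun r =>
      Submodule.subset_span ⟨r, rfl⟩
    obtain ⟨c₁, c₂, c₃, hx'⟩ := hspan ⟨x, hx⟩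
    have key : ⁅(⟨x, hx⟩ : s), w⁆ ∈ Submodule.span ℂ (Set.range v) := by
      rw [hx']
      induction hw using Submodule.span_induction with
      | mem w hw =>
        obtain ⟨r, rfl⟩ := hw
        rw [add_lie, add_lie, smul_lie, smul_lie, smul_lie, vf, vh]
        refine add_mem (add_mem (Submodule.smul_mem _ _ ?_) (Submodule.smul_mem _ _ (hv_in _)))
          (Submodule.smul_mem _ _ (Submodule.smul_mem _ _ (hv_in _)))
        cases r with
        | zero => rw [ve0]; exact zero_mem _
        | succ r => rw [ve]; exact Submodule.smul_mem _ _ (hv_in _)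
      | zero => rw [lie_zero]; exact zero_mem _
      | add a b _ _ ha hb => rw [lie_add]; exact add_mem ha hb
      | smul c a _ ha => rw [lie_smul]; exact Submodule.smul_mem _ _ ha
    exact key
  have hWle : Submodule.span ℂ (Set.range v) ≤ V := by
    rw [Submodule.span_le]; rintro _ ⟨r, rfl⟩; exact vV r
  have hWV : Submodule.span ℂ (Set.range v) = V := by
    refine (hVirr _ hWle hWinv).resolve_left fun hb => ?_
    have : v 0 ∈ (⊥ : Submodule ℂ g) := by rw [← hb]; exact Submodule.subset_span ⟨0, rfl⟩
    exact vnz 0 (Nat.zero_le _) ((Submodule.mem_bot ℂ).mp this)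
  have hli : LinearIndependent ℂ (fun r : Fin (n + 1) => v r) := by
    refine Module.End.eigenvectors_linearIndependent' (toEnd ℂ s g h)
      (fun r : Fin (n + 1) => (n : ℂ) - 2 * ((r : ℕ) : ℂ)) ?_ _ ?_
    · intro a b hab
      simp only [sub_right_inj, mul_eq_mul_left_iff, Nat.cast_inj, OfNat.ofNat_ne_zero,
        or_false] at hab
      exact Fin.ext hab
    · intro r
      rw [Module.End.hasEigenvector_iff, Module.End.mem_eigenspace_iff]
      exact ⟨vh r, vnz r (Nat.lt_succ_iff.mp r.2)⟩
  have hspan2 : Submodule.span ℂ (Set.range (fun r : Fin (n + 1) => v r)) = V := by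
    rw [← hWV]
    apply le_antisymm
    · apply Submodule.span_mono
      rintro _ ⟨r, rfl⟩; exact ⟨r, rfl⟩
    · rw [Submodule.span_le]
      rintro _ ⟨r, rfl⟩
      by_cases hr : r < n + 1
      · exact Submodule.subset_span ⟨⟨r, hr⟩, rfl⟩
      · obtain ⟨k, rfl⟩ := Nat.exists_eq_add_of_le (not_lt.mp hr)
        rw [vz]; exact zero_mem _
  have hnd : n = d := by
    have := finrank_span_eq_card hli
    rw [hspan2, hd, Fintype.card_fin] at this
    omega
  refine ⟨v, vV, vf, ?_, hWV.ge, ?_⟩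
  · rw [← hnd]; exact vh
  · intro h0
    refine hli.notMem_span_image (s := {r | r ≠ 0}) (x := 0) (by simp) ?_
    refine (Submodule.span_le.mpr ?_) h0
    rintro _ ⟨r, rfl⟩
    by_cases hr : r + 1 < n + 1
    · exact Submodule.subset_span ⟨⟨r + 1, hr⟩, by simp, rfl⟩
    · obtain ⟨k, hk⟩ := Nat.exists_eq_add_of_le (not_lt.mp hr)
      simp only [hk, vz]; exact zero_mem _

/-- The functional dual to the highest weight vector. -/
theorem exists_phi {g : Type*} [LieRing g] [LieAlgebra ℂ g] (h f : g) (V : Submodule ℂ g)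
    (d : ℂ) (v : ℕ → g) (vf : ∀ r, ⁅f, v r⁆ = v (r + 1))
    (vh : ∀ r : ℕ, ⁅h, v r⁆ = (d - 2 * r) • v r)
    (hV : V ≤ Submodule.span ℂ (Set.range v)) (vV : ∀ r, v r ∈ V)
    (h0 : v 0 ∉ Submodule.span ℂ (Set.range fun r => v (r + 1))) :
    ∃ φ : g →ₗ[ℂ] ℂ, (∃ x ∈ V, φ x ≠ 0) ∧ (∀ x ∈ V, φ ⁅f, x⁆ = 0) ∧
      ∀ x ∈ V, φ ⁅h, x⁆ = d * φ x := by
  obtain ⟨φ, hφ0, hφ⟩ := Submodule.exists_le_ker_of_notMem h0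
  have hφs : ∀ r, φ (v (r + 1)) = 0 := fun r => hφ (Submodule.subset_span ⟨r, rfl⟩)
  refine ⟨φ, ⟨v 0, vV 0, hφ0⟩, fun x hx => ?_, fun x hx => ?_⟩
  · have hx' := hV hx
    clear hx
    induction hx' using Submodule.span_induction with
    | mem w hw => obtain ⟨r, rfl⟩ := hw; rw [vf, hφs]
    | zero => simp
    | add a b _ _ ha hb => rw [lie_add, map_add, ha, hb, add_zero]
    | smul c a _ ha => rw [lie_smul, map_smul, ha, smul_zero]
  · have hx' := hV hx
    clear hx
    induction hx' using Submodule.span_induction with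
    | mem w hw =>
      obtain ⟨r, rfl⟩ := hw
      rw [vh, map_smul, smul_eq_mul]
      cases r with
      | zero => simp
      | succ r => rw [hφs]; simp
    | zero => simp
    | add a b _ _ ha hb => rw [lie_add, map_add, ha, hb, map_add, mul_add]
    | smul c a _ ha => rw [lie_smul, map_smul, ha, map_smul, smul_eq_mul, smul_eq_mul]; ring

theorem exists_pair {g : Type*} [LieRing g] [LieAlgebra ℂ g] (h f : g) (A B Q : Submodule ℂ g)
    (a b q : ℕ) (v w : ℕ → g)
    (vf : ∀ r, ⁅f, v r⁆ = v (r + 1)) (vh : ∀ r : ℕ, ⁅h, v r⁆ = ((a : ℂ) - 2 * r) • v r)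
    (hA : A ≤ Submodule.span ℂ (Set.range v)) (vA : ∀ r, v r ∈ A)
    (wf : ∀ r, ⁅f, w r⁆ = w (r + 1)) (wh : ∀ r : ℕ, ⁅h, w r⁆ = ((b : ℂ) - 2 * r) • w r)
    (hB : B ≤ Submodule.span ℂ (Set.range w)) (wB : ∀ r, w r ∈ B)
    (φ : g →ₗ[ℂ] ℂ) (hφ0 : ∃ x ∈ Q, φ x ≠ 0) (hφf : ∀ x ∈ Q, φ ⁅f, x⁆ = 0)
    (hφh : ∀ x ∈ Q, φ ⁅h, x⁆ = q * φ x) (hQ : Symp.lieSpan2 g A B = Q) :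
    ∃ c : ℕ, a + b = q + 2 * c ∧ φ ⁅v 0, w c⁆ ≠ 0 ∧
      φ ⁅v c, w 0⁆ = (-1) ^ c * φ ⁅v 0, w c⁆ := by
  have hin : ∀ i j, ⁅v i, w j⁆ ∈ Q := fun i j => by
    rw [← hQ]; exact Submodule.subset_span ⟨_, vA i, _, wB j, rfl⟩
  have shift1 : ∀ i j, φ ⁅v (i + 1), w j⁆ = - φ ⁅v i, w (j + 1)⁆ := by
    intro i j
    have := hφf _ (hin i j)
    rw [leibniz_lie, vf, wf, map_add] at this
    exact eq_neg_of_add_eq_zero_left this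
  have shift : ∀ i j, φ ⁅v i, w j⁆ = (-1) ^ i * φ ⁅v 0, w (i + j)⁆ := by
    intro i
    induction i with
    | zero => intro j; simp
    | succ i ih =>
      intro j
      rw [shift1, ih, pow_succ, show i + 1 + j = i + (j + 1) by ring]; ring
  obtain ⟨i, j, hij⟩ : ∃ i j, φ ⁅v i, w j⁆ ≠ 0 := by
    by_contra! hc
    obtain ⟨x, hx, hx0⟩ := hφ0
    apply hx0
    rw [← hQ] at hx
    have h1 : ∀ j, ∀ y ∈ A, φ ⁅y, w j⁆ = 0 := by
      intro j y hy
      have hy' := hA hy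
      clear hy
      induction hy' using Submodule.span_induction with
      | mem z hz => obtain ⟨r, rfl⟩ := hz; exact hc r j
      | zero => simp
      | add a b _ _ ha hb => rw [add_lie, map_add, ha, hb, add_zero]
      | smul c a _ ha => rw [smul_lie, map_smul, ha, smul_zero]
    have h2 : ∀ y ∈ A, ∀ z ∈ B, φ ⁅y, z⁆ = 0 := by
      intro y hy z hz
      have hz' := hB hz
      clear hz
      induction hz' using Submodule.span_induction with
      | mem z hz => obtain ⟨r, rfl⟩ := hz; exact h1 r y hy
      | zero => simp
      | add a b _ _ ha hb => rw [lie_add, map_add, ha, hb, add_zero]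
      | smul c a _ ha => rw [lie_smul, map_smul, ha, smul_zero]
    have h3 : Symp.lieSpan2 g A B ≤ LinearMap.ker φ := by
      refine Submodule.span_le.mpr ?_
      rintro _ ⟨y, hy, u, hu, rfl⟩
      exact h2 y hy u hu
    exact h3 hx
  have hij0 : φ ⁅v 0, w (i + j)⁆ ≠ 0 := by
    intro h0; apply hij; rw [shift, h0, mul_zero]
  refine ⟨i + j, ?_, hij0, by simpa using shift (i + j) 0⟩
  have := hφh _ (hin 0 (i + j))
  rw [leibniz_lie, vh, wh, smul_lie, lie_smul, ← add_smul, map_smul, smul_eq_mul] at this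
  have := mul_right_cancel₀ hij0 this
  have h2 : ((a + b : ℕ) : ℂ) = ((q + 2 * (i + j) : ℕ) : ℂ) := by
    push_cast at this ⊢
    linear_combination this
  exact_mod_cast h2

end SympAux
namespace SympAux

theorem exists_sl2 (s : Type*) [LieRing s] [LieAlgebra ℂ s]
    (φ : s ≃ₗ⁅ℂ⁆ LieAlgebra.SpecialLinear.sl (Fin 2) ℂ) :
    (∃ h e f : s, IsSl2Triple h e f ∧
      ∀ x : s, ∃ c₁ c₂ c₃ : ℂ, x = c₁ • e + c₂ • f + c₃ • h) ∧
    ∀ a : s, (∀ y : s, ⁅a, y⁆ = 0) → a = 0 := by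
  let E : LieAlgebra.SpecialLinear.sl (Fin 2) ℂ :=
    ⟨!![0, 1; 0, 0], by
      change Matrix.trace (!![0, 1; 0, 0] : Matrix (Fin 2) (Fin 2) ℂ) = 0; simp [Matrix.trace_fin_two]⟩
  let F : LieAlgebra.SpecialLinear.sl (Fin 2) ℂ :=
    ⟨!![0, 0; 1, 0], by
      change Matrix.trace (!![0, 0; 1, 0] : Matrix (Fin 2) (Fin 2) ℂ) = 0; simp [Matrix.trace_fin_two]⟩
  let H : LieAlgebra.SpecialLinear.sl (Fin 2) ℂ :=
    ⟨!![1, 0; 0, -1], by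
      change Matrix.trace (!![1, 0; 0, -1] : Matrix (Fin 2) (Fin 2) ℂ) = 0; simp [Matrix.trace_fin_two]⟩
  have hEF : ⁅E, F⁆ = H := by
    apply Subtype.ext
    rw [LieAlgebra.SpecialLinear.sl_bracket]
    ext i j; fin_cases i <;> fin_cases j <;> simp [E, F, H]
  have hHE : ⁅H, E⁆ = 2 • E := by
    apply Subtype.ext
    rw [LieAlgebra.SpecialLinear.sl_bracket]
    ext i j; fin_cases i <;> fin_cases j <;> simp [E, H]; norm_num
  have hHF : ⁅H, F⁆ = -(2 • F) := by
    apply Subtype.ext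
    rw [LieAlgebra.SpecialLinear.sl_bracket]
    ext i j; fin_cases i <;> fin_cases j <;> simp [F, H]; norm_num
  have hdiag : ∀ x : LieAlgebra.SpecialLinear.sl (Fin 2) ℂ, x.1 1 1 = - x.1 0 0 := by
    intro x
    have : x.1.trace = 0 := x.2
    rw [Matrix.trace_fin_two] at this
    linear_combination this
  have hsp : ∀ x : LieAlgebra.SpecialLinear.sl (Fin 2) ℂ,
      x = x.1 0 1 • E + x.1 1 0 • F + x.1 0 0 • H := by
    intro x
    apply Subtype.ext
    have := hdiag x
    ext i j; fin_cases i <;> fin_cases j <;> simp [E, F, H, this]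
  refine ⟨⟨φ.symm H, φ.symm E, φ.symm F, ⟨?_, ?_, ?_, ?_⟩, ?_⟩, ?_⟩
  · intro h0
    have : H = 0 := by
      have := congrArg φ h0
      simpa using this
    have := congrFun (congrFun (congrArg Subtype.val this) 0) 0
    simp [H] at this
  · rw [← LieEquiv.map_lie, hEF]
  · rw [← LieEquiv.map_lie, hHE, map_nsmul]
  · rw [← LieEquiv.map_lie, hHF, map_neg, map_nsmul]
  · intro x
    refine ⟨(φ x).1 0 1, (φ x).1 1 0, (φ x).1 0 0, ?_⟩
    have := congrArg φ.symm (hsp (φ x))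
    rw [map_add, map_add, map_smul, map_smul, map_smul] at this
    simpa using this
  · intro a ha
    have ha' : ∀ y : LieAlgebra.SpecialLinear.sl (Fin 2) ℂ, ⁅φ a, y⁆ = 0 := fun y => by
      have := congrArg φ (ha (φ.symm y))
      rw [LieEquiv.map_lie, LieEquiv.apply_symm_apply, map_zero] at this
      exact this
    have h1 := congrArg Subtype.val (ha' E)
    have h2 := congrArg Subtype.val (ha' F)
    rw [LieAlgebra.SpecialLinear.sl_bracket] at h1 h2
    have d := hdiag (φ a)
    have h10 := congrFun (congrFun h1 0) 0
    have h11 := congrFun (congrFun h1 0) 1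
    have h20 := congrFun (congrFun h2 0) 0
    rw [Matrix.sub_apply, Matrix.mul_apply, Matrix.mul_apply, Fin.sum_univ_two,
      Fin.sum_univ_two] at h10 h11 h20
    simp [E] at h10 h11
    simp [F] at h20
    rw [d] at h11
    have z : (φ a).1 0 0 = 0 := by linear_combination h11 / 2
    have : φ a = 0 := by
      have t := hsp (φ a)
      rw [z, h20, h10] at t
      simpa using t
    simpa using this

theorem exists_diag {g ι : Type*} [AddCommGroup g] [Module ℂ g] [Fintype ι]
    (W : ι → Submodule ℂ g) (hW : iSupIndep W) (c : ι → ℂ) :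
    ∃ D : g →ₗ[ℂ] g, ∀ i, ∀ x ∈ W i, D x = c i • x := by
  classical
  have hinj := hW.dfinsupp_lsum_injective
  obtain ⟨L, hL⟩ := LinearMap.exists_leftInverse_of_injective _ (LinearMap.ker_eq_bot.mpr hinj)
  refine ⟨(DFinsupp.lsum ℕ fun i => c i • (W i).subtype) ∘ₗ L, fun i x hx => ?_⟩
  have h1 := LinearMap.congr_fun hL (DFinsupp.single i (⟨x, hx⟩ : W i))
  simp only [LinearMap.comp_apply, DFinsupp.lsum_single, Submodule.subtype_apply,
    LinearMap.id_apply] at h1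
  rw [LinearMap.comp_apply, h1]
  simp

theorem rad_le {g : Type*} [LieRing g] [LieAlgebra ℂ g]
    (hp : Symp.IsPerfectLie g) (s : LieSubalgebra ℂ g)
    (hs : IsCompl s.toSubmodule (LieAlgebra.radical ℂ g).toSubmodule) :
    LieAlgebra.radical ℂ g ≤ ⁅(⊤ : LieIdeal ℂ g), LieAlgebra.radical ℂ g⁆ := by
  set R := LieAlgebra.radical ℂ g
  set K := ⁅(⊤ : LieIdeal ℂ g), R⁆
  have hKR : K ≤ R := LieSubmodule.lie_le_right _ _
  have htop : ∀ x : g, x ∈ s.toSubmodule ⊔ K.toSubmodule := by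
    intro x
    have hx : x ∈ ⁅(⊤ : LieIdeal ℂ g), (⊤ : LieIdeal ℂ g)⁆ := by
      rw [show ⁅(⊤ : LieIdeal ℂ g), (⊤ : LieIdeal ℂ g)⁆ = ⊤ from hp]; trivial
    rw [← LieSubmodule.mem_toSubmodule, LieSubmodule.lieIdeal_oper_eq_linear_span'] at hx
    refine (Submodule.span_le.mpr ?_) hx
    rintro _ ⟨a, -, b, -, rfl⟩
    have hdec : ∀ y : g, ∃ u ∈ s, ∃ w ∈ R, u + w = y := fun y => by
      have : y ∈ s.toSubmodule ⊔ R.toSubmodule := by rw [hs.sup_eq_top]; trivial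
      exact Submodule.mem_sup.mp this
    obtain ⟨a1, ha1, a2, ha2, rfl⟩ := hdec a
    obtain ⟨b1, hb1, b2, hb2, rfl⟩ := hdec b
    have e : ⁅a1 + a2, b1 + b2⁆ = ⁅a1, b1⁆ + (⁅a1 + a2, b2⁆ - ⁅b1, a2⁆) := by
      rw [← lie_skew b1 a2, lie_add, add_lie, add_lie]; abel
    rw [e]
    refine Submodule.add_mem_sup (s.lie_mem ha1 hb1) (sub_mem ?_ ?_)
    · exact LieSubmodule.lie_mem_lie (LieSubmodule.mem_top _) hb2
    · exact LieSubmodule.lie_mem_lie (LieSubmodule.mem_top _) ha2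
  intro x hx
  obtain ⟨u, hu, w, hw, rfl⟩ := Submodule.mem_sup.mp (htop x)
  have huR : u ∈ R := by
    have := sub_mem hx (hKR hw)
    simpa using this
  have : u = 0 := by
    have := Submodule.disjoint_def.mp hs.disjoint u hu huR
    exact this
  rw [this, zero_add]; exact hw

theorem C_anti (g : Type*) [LieRing g] [LieAlgebra ℂ g] : Antitone (C g) :=
  antitone_nat_of_succ_le fun _ => LieSubmodule.lie_le_right _ _

theorem lieSpan2_bot {g : Type*} [LieRing g] [LieAlgebra ℂ g] {A B : Submodule ℂ g} :
    Symp.lieSpan2 g A B = ⊥ ↔ ∀ x ∈ A, ∀ y ∈ B, ⁅x, y⁆ = 0 := by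
  constructor
  · intro h x hx y hy
    have : ⁅x, y⁆ ∈ Symp.lieSpan2 g A B := Submodule.subset_span ⟨x, hx, y, hy, rfl⟩
    rw [h] at this
    exact (Submodule.mem_bot ℂ).mp this
  · intro h
    rw [eq_bot_iff]
    refine Submodule.span_le.mpr ?_
    rintro _ ⟨x, hx, y, hy, rfl⟩
    exact (Submodule.mem_bot ℂ).mpr (h x hx y hy)

theorem lieSpan2_comm {g : Type*} [LieRing g] [LieAlgebra ℂ g] (A B : Submodule ℂ g) :
    Symp.lieSpan2 g A B = Symp.lieSpan2 g B A := by
  have key : ∀ A B : Submodule ℂ g, Symp.lieSpan2 g A B ≤ Symp.lieSpan2 g B A := by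
    intro A B
    refine Submodule.span_le.mpr ?_
    rintro _ ⟨x, hx, y, hy, rfl⟩
    rw [← lie_skew]
    exact neg_mem (Submodule.subset_span ⟨y, hy, x, hx, rfl⟩)
  exact le_antisymm (key _ _) (key _ _)

theorem lam_zero (g : Type*) [LieRing g] [LieAlgebra ℂ g] [FiniteDimensional ℂ g]
    (hsymp : Symp.IsSympathetic g) (s : LieSubalgebra ℂ g)
    (hs : IsCompl s.toSubmodule (LieAlgebra.radical ℂ g).toSubmodule)
    (hcf : ∀ a : s, (∀ y : s, ⁅a, y⁆ = 0) → a = 0)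
    (V : Fin 4 → Submodule ℂ g) (hdec : Symp.IsDecomp g s V)
    (hT : ∀ i j, Symp.lieSpan2 g (V i) (V j) = ⊥ ∨ ∃ q, Symp.lieSpan2 g (V i) (V j) = V q)
    (l : Fin 4 → ℕ)
    (hl : ∀ i j q, Symp.lieSpan2 g (V i) (V j) = V q → l i + l j = l q) : l = 0 := by
  obtain ⟨hirr, hind, hsup⟩ := hdec
  have hVR : ∀ i, ∀ x ∈ V i, x ∈ LieAlgebra.radical ℂ g := fun i x hx => by
    have : x ∈ (LieAlgebra.radical ℂ g).toSubmodule := by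
      rw [← hsup]; exact Submodule.mem_iSup_of_mem i hx
    exact this
  obtain ⟨D1, hD1⟩ := exists_diag V hind (fun i => (l i : ℂ))
  let D : g →ₗ[ℂ] g := D1 ∘ₗ (LieAlgebra.radical ℂ g).toSubmodule.projection _ hs.symm
  have hDs : ∀ x ∈ s, D x = 0 := by
    intro x hx
    have : (LieAlgebra.radical ℂ g).toSubmodule.projection _ hs.symm x = 0 :=
      (Submodule.projection_apply_eq_zero_iff hs.symm).mpr hx
    simp only [D, LinearMap.comp_apply, this, map_zero]
  have hDV : ∀ i, ∀ x ∈ V i, D x = (l i : ℂ) • x := by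
    intro i x hx
    simp only [D, LinearMap.comp_apply]
    rw [Submodule.projection_apply_of_mem_left hs.symm (hVR i x hx)]
    exact hD1 i x hx
  let U : Option (Fin 4) → Submodule ℂ g := fun o => o.elim s.toSubmodule V
  let c : Option (Fin 4) → ℂ := fun o => o.elim 0 (fun i => (l i : ℂ))
  have hUtop : ∀ x : g, x ∈ ⨆ o, U o := by
    intro x
    rw [iSup_option]
    show x ∈ s.toSubmodule ⊔ ⨆ i, V i
    rw [hsup, hs.sup_eq_top]; trivial
  have hDU : ∀ o, ∀ x ∈ U o, D x = c o • x := by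
    intro o x hx
    cases o with
    | none => simpa [c] using hDs x hx
    | some i => exact hDV i x hx
  have hbr : ∀ o p, ∀ x ∈ U o, ∀ y ∈ U p, D ⁅x, y⁆ = (c o + c p) • ⁅x, y⁆ := by
    intro o p x hx y hy
    cases o with
    | none =>
      cases p with
      | none => simpa [c] using hDs _ (s.lie_mem hx hy)
      | some j => simpa [c] using hDV j _ ((hirr j).2.1 x hx y hy)
    | some i =>
      cases p with
      | none =>
        have : ⁅x, y⁆ ∈ V i := by
          rw [← lie_skew]; exact neg_mem ((hirr i).2.1 y hy x hx)
        simpa [c] using hDV i _ this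
      | some j =>
        rcases hT i j with h | ⟨q, hq⟩
        · rw [lieSpan2_bot.mp h x hx y hy]; simp
        · have hm : ⁅x, y⁆ ∈ V q := by
            rw [← hq]; exact Submodule.subset_span ⟨x, hx, y, hy, rfl⟩
          rw [hDV q _ hm, ← hl i j q hq]
          simp [c]
  have hleib : ∀ a b : g, D ⁅a, b⁆ = ⁅a, D b⁆ - ⁅b, D a⁆ := by
    intro a b
    have haU := hUtop a
    have hbU := hUtop b
    induction haU using Submodule.iSup_induction' with
    | zero => simp
    | add x y _ _ hx hy =>
      rw [add_lie, map_add, hx, hy, add_lie, map_add, lie_add]; abel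
    | mem o x hx =>
      induction hbU using Submodule.iSup_induction' with
      | zero => simp
      | add y z _ _ hy hz =>
        rw [lie_add, map_add, hy, hz, add_lie, map_add, lie_add]; abel
      | mem p y hy =>
        rw [hbr o p x hx y hy, hDU o x hx, hDU p y hy, lie_smul, lie_smul, ← lie_skew x y,
          add_smul, smul_neg, smul_neg]
        rw [← lie_skew y x]
        simp only [smul_neg, neg_neg]
        abel
  obtain ⟨x, hx⟩ := hsymp.2.2 ⟨D, hleib⟩
  have hx' : ∀ y, D y = ⁅x, y⁆ := hx
  have hxR : x ∈ LieAlgebra.radical ℂ g := by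
    have : x ∈ s.toSubmodule ⊔ (LieAlgebra.radical ℂ g).toSubmodule := by
      rw [hs.sup_eq_top]; trivial
    obtain ⟨a, ha, r, hr, rfl⟩ := Submodule.mem_sup.mp this
    have : (⟨a, ha⟩ : s) = 0 := by
      apply hcf
      rintro ⟨y, hy⟩
      apply Subtype.ext
      show ⁅a, y⁆ = 0
      have h1 := hx' y
      rw [hDs y hy, add_lie] at h1
      have h2 : ⁅a, y⁆ = -⁅r, y⁆ := eq_neg_of_add_eq_zero_left h1.symm
      refine Submodule.disjoint_def.mp hs.disjoint _ (s.lie_mem ha hy) ?_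
      rw [h2]
      exact neg_mem (lie_mem_left ℂ g _ r y hr)
    have : a = 0 := congrArg Subtype.val this
    rw [this, zero_add]; exact hr
  obtain ⟨n, hn⟩ := C_nil (rad_le hsymp.2.1 s hs)
  funext i
  by_contra hli
  have hli' : (l i : ℂ) ≠ 0 := by exact_mod_cast hli
  obtain ⟨v, hv, hv0⟩ := (Submodule.ne_bot_iff _).mp (hirr i).1
  have hvC : ∀ k, v ∈ C g k := by
    intro k
    induction k with
    | zero => exact hVR i v hv
    | succ k ih =>
      have h1 : ⁅x, v⁆ ∈ C g (k + 1) := LieSubmodule.lie_mem_lie hxR ih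
      rw [← hx', hDV i v hv] at h1
      have h2 := (C g (k + 1)).smul_mem ((l i : ℂ)⁻¹) h1
      rwa [smul_smul, inv_mul_cancel₀ hli', one_smul] at h2
  have := hvC n
  rw [hn] at this
  exact hv0 (by simpa using this)

end SympAux


/-- for a sympathetic `g = sl₂(ℂ) ⋉ h` with 4 simple modules and
`Z(h) = V_k`, all highest weights are even. Here `V 3 = V_k` and `d i` is the highest
weight of `V i` (so `dim V i = d i + 1`). -/
theorem stmt14 (g : Type*) [LieRing g] [LieAlgebra ℂ g] [FiniteDimensional ℂ g]
    (hsymp : Symp.IsSympathetic g)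
    (s : LieSubalgebra ℂ g) (hs : Symp.IsSl2Levi g s)
    (V : Fin 4 → Submodule ℂ g) (hdec : Symp.IsDecomp g s V)
    (hconv : Symp.Convention g V)
    (d : Fin 4 → ℕ) (hd : ∀ i, Module.finrank ℂ (V i) = d i + 1)
    (hZ : Symp.centerRad g = V 3) :
    ∀ i, Even (d i) := by
  classical
  obtain ⟨⟨φ⟩, hcompl⟩ := hs
  obtain ⟨⟨h, e, f, t, hspan⟩, hcf⟩ := SympAux.exists_sl2 s φ
  have hdec' := hdec
  obtain ⟨hirr, hind, hsup⟩ := hdec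
  have hVinj : Function.Injective V := hind.injective fun i => (hirr i).1
  have hT : ∀ i j, Symp.lieSpan2 g (V i) (V j) = ⊥ ∨
      ∃ q, Symp.lieSpan2 g (V i) (V j) = V q := by
    intro i j
    by_cases hb : Symp.lieSpan2 g (V i) (V j) = ⊥
    · exact Or.inl hb
    · exact Or.inr (hconv i j hb).exists
  choose v vV vf vh hVv v0 using fun i =>
    SympAux.exists_hw s h e f t hspan (V i) (hirr i) (d i) (hd i)
  choose ψ hψ0 hψf hψh using fun i =>
    SympAux.exists_phi (h : g) (f : g) (V i) (d i) (v i) (vf i) (vh i) (hVv i) (vV i) (v0 i)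
  have hpair : ∀ i j q, Symp.lieSpan2 g (V i) (V j) = V q →
      ∃ c : ℕ, d i + d j = d q + 2 * c ∧ ψ q ⁅v i 0, v j c⁆ ≠ 0 ∧
      ψ q ⁅v i c, v j 0⁆ = (-1) ^ c * ψ q ⁅v i 0, v j c⁆ := fun i j q hq =>
    SympAux.exists_pair (h : g) (f : g) (V i) (V j) (V q) (d i) (d j) (d q) (v i) (v j)
      (vf i) (vh i) (hVv i) (vV i) (vf j) (vh j) (hVv j) (vV j) (ψ q) (hψ0 q) (hψf q) (hψh q) hq
  have hdiag : ∀ i q, Symp.lieSpan2 g (V i) (V i) = V q →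
      ∃ c : ℕ, 2 * d i = d q + 2 * c ∧ c % 2 = 1 := by
    intro i q hq
    obtain ⟨c, hc, hne, hsw⟩ := hpair i i q hq
    refine ⟨c, by omega, ?_⟩
    by_contra hodd
    have hev : Even c := Nat.even_iff.mpr (by omega)
    rw [hev.neg_one_pow, one_mul, ← lie_skew, map_neg] at hsw
    apply hne
    linear_combination (-1 / 2 : ℂ) * hsw
  obtain ⟨n, hn⟩ := SympAux.C_nil (SympAux.rad_le hsymp.2.1 s hcompl)
  have hVR : ∀ i, V i ≤ (LieAlgebra.radical ℂ g).toSubmodule := fun i => by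
    rw [← hsup]; exact le_iSup V i
  let N : Fin 4 → ℕ := fun i => Nat.findGreatest (fun k => V i ≤ (SympAux.C g k).toSubmodule) n
  have hN1 : ∀ i, V i ≤ (SympAux.C g (N i)).toSubmodule := fun i =>
    Nat.findGreatest_spec (P := fun k => V i ≤ (SympAux.C g k).toSubmodule) (Nat.zero_le n) (hVR i)
  have hN2 : ∀ i, N i < n := by
    intro i
    refine lt_of_le_of_ne (Nat.findGreatest_le n) fun hc => (hirr i).1 ?_
    have := hN1 i
    rw [hc, hn] at this
    exact le_bot_iff.mp this
  have main := SympAux.comb (fun i j q => Symp.lieSpan2 g (V i) (V j) = V q) d N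
    (fun i j q hq => by rw [SympAux.lieSpan2_comm]; exact hq)
    (fun i j q q' hq hq' => hVinj (hq.symm.trans hq'))
    (fun i j q hq => by
      refine Nat.le_findGreatest (P := fun k => V q ≤ (SympAux.C g k).toSubmodule) (hN2 i) ?_
      rw [← hq]
      refine Submodule.span_le.mpr ?_
      rintro _ ⟨x, hx, y, hy, rfl⟩
      rw [← lie_skew]
      exact neg_mem (LieSubmodule.lie_mem_lie (hVR j hy) (hN1 i hx)))
    (fun i j q hq => by
      obtain ⟨c, hc, -⟩ := hpair i j q hq
      omega)
    (fun i j q hq hq' => by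
      obtain ⟨c, hc, hc1⟩ := hdiag i q hq
      obtain ⟨c', hc', hc1'⟩ := hdiag j q hq'
      omega)
    (fun a b c q r hq hr => by
      by_contra hcon
      rw [not_or] at hcon
      obtain ⟨hc1, hc2⟩ := hcon
      have vanish : ∀ a b c, (¬ ∃ u r', Symp.lieSpan2 g (V a) (V b) = V u ∧
          Symp.lieSpan2 g (V u) (V c) = V r') →
          ∀ x ∈ V a, ∀ y ∈ V b, ∀ z ∈ V c, ⁅⁅x, y⁆, z⁆ = 0 := by
        intro a b c hno x hx y hy z hz
        rcases hT a b with hb | ⟨u, hu⟩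
        · rw [SympAux.lieSpan2_bot.mp hb x hx y hy, zero_lie]
        · rcases hT u c with hb | ⟨r', hr'⟩
          · refine SympAux.lieSpan2_bot.mp hb _ ?_ z hz
            rw [← hu]; exact Submodule.subset_span ⟨x, hx, y, hy, rfl⟩
          · exact absurd ⟨u, r', hu, hr'⟩ hno
      apply (hirr r).1
      rw [← hr, SympAux.lieSpan2_bot]
      intro x hx w hw
      rw [← hq] at hw
      have hle : Symp.lieSpan2 g (V b) (V c) ≤ LinearMap.ker (LieModule.toEnd ℂ g g x) := by
        refine Submodule.span_le.mpr ?_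
        rintro _ ⟨y, hy, z, hz, rfl⟩
        show ⁅x, ⁅y, z⁆⁆ = 0
        rw [leibniz_lie, vanish a b c hc1 x hx y hy z hz, ← lie_skew y,
          vanish a c b hc2 x hx z hz y hy, neg_zero, add_zero]
      exact hle hw)
    (fun l hl => SympAux.lam_zero g hsymp s hcompl hcf V hdec' hT l hl)
  intro i
  exact Nat.even_iff.mpr (main i)
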